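/- arXiv:2108.07088 — 8 statements merged into one kernel-verified Lean document; each statement's English description precedes it below -/
import Mathlib

section
/- Let m ∈ ℕ and let a, v ∈ ℝ^m satisfy the componentwise sign condition (sign(a_l) = sign(v_l) for every component l). Then there exists a symmetric positive semidefinite matrix D ∈ ℝ^{m×m} such that D v = 2 a. (Hence the optimized numerical diffusion term of the paper, ½ D v = a, is realized by a genuine symmetric positive semidefinite dissipation operator whenever the flux sign stability condition holds.) -/
/-- If `a, v : ℝ^m` satisfy the componentwise sign condition, then there
exists a symmetric positive semidefinite matrix `D` with `D v = 2 a`. -/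
theorem exists_symm_psd_realizing_diffusion (m : ℕ) (a v : Fin m → ℝ)
    (hsign : ∀ l, Real.sign (a l) = Real.sign (v l)) :
    ∃ D : Matrix (Fin m) (Fin m) ℝ, D.IsSymm ∧
      (∀ x : Fin m → ℝ, 0 ≤ ∑ l, x l * D.mulVec x l) ∧
      D.mulVec v = fun l => 2 * a l := by
  have key : ∀ l, 0 ≤ 2 * a l / v l ∧ 2 * a l / v l * v l = 2 * a l := by
    intro l
    have h := hsign l
    rcases lt_trichotomy (v l) 0 with hv | hv | hv
    · rw [Real.sign_of_neg hv] at h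
      have ha : a l < 0 := by
        rcases lt_trichotomy (a l) 0 with h1 | h1 | h1
        · exact h1
        · rw [h1, Real.sign_zero] at h; norm_num at h
        · rw [Real.sign_of_pos h1] at h; norm_num at h
      exact ⟨div_nonneg_of_nonpos (by linarith) hv.le, div_mul_cancel₀ _ hv.ne⟩
    · rw [hv, Real.sign_zero, Real.sign_eq_zero_iff] at h
      simp [h]
    · rw [Real.sign_of_pos hv] at h
      have ha : 0 < a l := by
        rcases lt_trichotomy (a l) 0 with h1 | h1 | h1
        · rw [Real.sign_of_neg h1] at h; norm_num at h
        · rw [h1, Real.sign_zero] at h; norm_num at h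
        · exact h1
      exact ⟨div_nonneg (by linarith) hv.le, div_mul_cancel₀ _ hv.ne'⟩
  refine ⟨Matrix.diagonal fun l => 2 * a l / v l, Matrix.isSymm_diagonal _, ?_, ?_⟩
  · intro x
    refine Finset.sum_nonneg fun l _ => ?_
    rw [Matrix.mulVec_diagonal]
    nlinarith [mul_nonneg (key l).1 (mul_self_nonneg (x l))]
  · funext l
    rw [Matrix.mulVec_diagonal]
    exact (key l).2
end

section
/- (Flux sign stability lemma.) Let m ∈ ℕ, let Δv, Δu ∈ ℝ^m satisfy the componentwise sign condition sign(Δv_l) = sign(Δu_l) for every l, let D ∈ ℝ^{m×m}, and let F, F* ∈ ℝ^m be related by F = F* − ½ D Δv. If F* − F and Δu satisfy the componentwise sign condition (sign((F* − F)_l) = sign(Δu_l) for every l), then the quadratic form Δvᵀ D Δv is nonnegative; i.e., the dissipation operator D acts nonnegatively on the entropy-variable jump, so the flux F is entropy stable. -/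
/-- Flux sign stability lemma: if `sign (Δv l) = sign (Δu l)` for all `l`,
`F = F* - ½ D Δv`, and `F* - F` and `Δu` satisfy the componentwise sign condition, then
the quadratic form `Δvᵀ D Δv` is nonnegative. -/
theorem flux_sign_stability (m : ℕ) (Δv Δu : Fin m → ℝ)
    (hsign : ∀ l, Real.sign (Δv l) = Real.sign (Δu l))
    (D : Matrix (Fin m) (Fin m) ℝ) (F Fstar : Fin m → ℝ)
    (hF : F = Fstar - (1/2 : ℝ) • D.mulVec Δv)
    (hsignF : ∀ l, Real.sign ((Fstar - F) l) = Real.sign (Δu l)) :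
    0 ≤ ∑ l, Δv l * D.mulVec Δv l := by
  apply Finset.sum_nonneg
  intro l _
  have h := (hsign l).trans (hsignF l).symm
  have e : (Fstar - F) l = (1/2 : ℝ) * D.mulVec Δv l := by
    rw [hF]; simp
  rw [e] at h
  generalize D.mulVec Δv l = b at h
  generalize Δv l = a at h
  rcases lt_trichotomy a 0 with ha | ha | ha <;> rcases lt_trichotomy b 0 with hb | hb | hb
  · exact (mul_pos_of_neg_of_neg ha hb).le
  · simp [hb]
  · rw [Real.sign_of_neg ha, Real.sign_of_pos (by linarith)] at h
    norm_num at h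
  · simp [ha]
  · simp [ha]
  · simp [ha]
  · rw [Real.sign_of_pos ha, Real.sign_of_neg (by linarith)] at h
    norm_num at h
  · simp [hb]
  · exact (mul_pos ha hb).le
end

section
/- (Discrete entropy conservation identity, algebraic core of Tadmor's theorem.) Let m ∈ ℕ and let v_{i−1}, v_i, v_{i+1} ∈ ℝ^m, ψ_{i−1}, ψ_i, ψ_{i+1} ∈ ℝ. Suppose F₊, F₋ ∈ ℝ^m satisfy ⟨v_{i+1} − v_i, F₊⟩ = ψ_{i+1} − ψ_i and ⟨v_i − v_{i−1}, F₋⟩ = ψ_i − ψ_{i−1}. Define q₊ = ⟨(v_i + v_{i+1})/2, F₊⟩ − (ψ_i + ψ_{i+1})/2 and q₋ = ⟨(v_{i−1} + v_i)/2, F₋⟩ − (ψ_{i−1} + ψ_i)/2. Then ⟨v_i, F₊ − F₋⟩ = q₊ − q₋. -/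
/-- Discrete entropy conservation identity: with entropy conservative
fluxes `F₊, F₋` at the two interfaces and the associated numerical entropy fluxes
`q₊, q₋`, one has `⟨v_i, F₊ - F₋⟩ = q₊ - q₋`. -/
theorem discrete_entropy_conservation_identity (m : ℕ)
    (vm vi vp : Fin m → ℝ) (ψm ψi ψp : ℝ) (Fp Fm : Fin m → ℝ)
    (hFp : ∑ l, (vp l - vi l) * Fp l = ψp - ψi)
    (hFm : ∑ l, (vi l - vm l) * Fm l = ψi - ψm)
    (qp qm : ℝ)
    (hqp : qp = (∑ l, ((vi l + vp l) / 2) * Fp l) - (ψi + ψp) / 2)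
    (hqm : qm = (∑ l, ((vm l + vi l) / 2) * Fm l) - (ψm + ψi) / 2) :
    ∑ l, vi l * (Fp l - Fm l) = qp - qm := by
  have key : ∑ l, vi l * (Fp l - Fm l)
      = (∑ l, ((vi l + vp l) / 2) * Fp l) - (1 / 2) * (∑ l, (vp l - vi l) * Fp l)
        - (∑ l, ((vm l + vi l) / 2) * Fm l) - (1 / 2) * (∑ l, (vi l - vm l) * Fm l) := by
    rw [Finset.mul_sum, Finset.mul_sum, ← Finset.sum_sub_distrib, ← Finset.sum_sub_distrib,
      ← Finset.sum_sub_distrib]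
    refine Finset.sum_congr rfl fun l _ => ?_
    ring
  rw [key, hFp, hFm, hqp, hqm]
  ring
end

section
/- (Cell entropy identity for entropy stable fluxes, algebraic core of Tadmor's entropy stability theorem.) Let m ∈ ℕ, v_{i−1}, v_i, v_{i+1} ∈ ℝ^m, ψ_{i−1}, ψ_i, ψ_{i+1} ∈ ℝ, and let F*₊, F*₋ ∈ ℝ^m satisfy ⟨v_{i+1} − v_i, F*₊⟩ = ψ_{i+1} − ψ_i and ⟨v_i − v_{i−1}, F*₋⟩ = ψ_i − ψ_{i−1}, with associated entropy fluxes q*₊ = ⟨(v_i + v_{i+1})/2, F*₊⟩ − (ψ_i + ψ_{i+1})/2 and q*₋ = ⟨(v_{i−1} + v_i)/2, F*₋⟩ − (ψ_{i−1} + ψ_i)/2. Let D₊, D₋ ∈ ℝ^{m×m}, set Δv₊ = v_{i+1} − v_i, Δv₋ = v_i − v_{i−1}, F̂₊ = F*₊ − ½ D₊ Δv₊, F̂₋ = F*₋ − ½ D₋ Δv₋, q̂₊ = q*₊ − ½ ⟨(v_i + v_{i+1})/2, D₊ Δv₊⟩, q̂₋ = q*₋ − ½ ⟨(v_{i−1}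 + v_i)/2, D₋ Δv₋⟩. Then ⟨v_i, F̂₊ − F̂₋⟩ = (q̂₊ − q̂₋) + ¼ (Δv₊ᵀ D₊ Δv₊ + Δv₋ᵀ D₋ Δv₋). In particular, if D₊ and D₋ are positive semidefinite, then ⟨v_i, F̂₊ − F̂₋⟩ ≥ q̂₊ − q̂₋. -/
/-- Cell entropy identity for entropy stable fluxes:
`⟨v_i, F̂₊ - F̂₋⟩ = (q̂₊ - q̂₋) + ¼ (Δv₊ᵀ D₊ Δv₊ + Δv₋ᵀ D₋ Δv₋)`; in particular if
`D₊, D₋` are positive semidefinite then `⟨v_i, F̂₊ - F̂₋⟩ ≥ q̂₊ - q̂₋`. -/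
theorem cell_entropy_identity_entropy_stable (m : ℕ)
    (vm vi vp : Fin m → ℝ) (ψm ψi ψp : ℝ) (Fsp Fsm : Fin m → ℝ)
    (hFp : ∑ l, (vp l - vi l) * Fsp l = ψp - ψi)
    (hFm : ∑ l, (vi l - vm l) * Fsm l = ψi - ψm)
    (qsp qsm : ℝ)
    (hqsp : qsp = (∑ l, ((vi l + vp l) / 2) * Fsp l) - (ψi + ψp) / 2)
    (hqsm : qsm = (∑ l, ((vm l + vi l) / 2) * Fsm l) - (ψm + ψi) / 2)
    (Dp Dm : Matrix (Fin m) (Fin m) ℝ)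
    (Δvp Δvm : Fin m → ℝ) (hΔvp : Δvp = vp - vi) (hΔvm : Δvm = vi - vm)
    (Fhp Fhm : Fin m → ℝ)
    (hFhp : Fhp = Fsp - (1/2 : ℝ) • Dp.mulVec Δvp)
    (hFhm : Fhm = Fsm - (1/2 : ℝ) • Dm.mulVec Δvm)
    (qhp qhm : ℝ)
    (hqhp : qhp = qsp - (1/2) * ∑ l, ((vi l + vp l) / 2) * Dp.mulVec Δvp l)
    (hqhm : qhm = qsm - (1/2) * ∑ l, ((vm l + vi l) / 2) * Dm.mulVec Δvm l) :
    (∑ l, vi l * (Fhp l - Fhm l) =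
      (qhp - qhm) + (1/4) * ((∑ l, Δvp l * Dp.mulVec Δvp l) + ∑ l, Δvm l * Dm.mulVec Δvm l)) ∧
    ((∀ x : Fin m → ℝ, 0 ≤ ∑ l, x l * Dp.mulVec x l) →
     (∀ x : Fin m → ℝ, 0 ≤ ∑ l, x l * Dm.mulVec x l) →
      qhp - qhm ≤ ∑ l, vi l * (Fhp l - Fhm l)) := by
  have key : ∑ l, vi l * (Fhp l - Fhm l) =
      (qhp - qhm) + (1/4) * ((∑ l, Δvp l * Dp.mulVec Δvp l) +
        ∑ l, Δvm l * Dm.mulVec Δvm l) := by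
    have h : ∑ l, vi l * (Fhp l - Fhm l) =
        (∑ l, ((vi l + vp l) / 2) * Fsp l) - (1/2) * (∑ l, (vp l - vi l) * Fsp l)
        - (∑ l, ((vm l + vi l) / 2) * Fsm l) - (1/2) * (∑ l, (vi l - vm l) * Fsm l)
        - (1/2) * (∑ l, ((vi l + vp l) / 2) * Dp.mulVec Δvp l)
        + (1/2) * (∑ l, ((vm l + vi l) / 2) * Dm.mulVec Δvm l)
        + (1/4) * (∑ l, Δvp l * Dp.mulVec Δvp l)
        + (1/4) * (∑ l, Δvm l * Dm.mulVec Δvm l) := by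
      simp only [Finset.mul_sum, ← Finset.sum_add_distrib, ← Finset.sum_sub_distrib]
      refine Finset.sum_congr rfl fun l _ => ?_
      have e1 : Δvp l = vp l - vi l := by rw [hΔvp]; rfl
      have e2 : Δvm l = vi l - vm l := by rw [hΔvm]; rfl
      have e3 : Fhp l = Fsp l - (1/2) * Dp.mulVec Δvp l := by rw [hFhp]; rfl
      have e4 : Fhm l = Fsm l - (1/2) * Dm.mulVec Δvm l := by rw [hFhm]; rfl
      rw [e3, e4, e1, e2]
      ring
    rw [h, hFp, hFm, hqhp, hqhm, hqsp, hqsm]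
    ring
  refine ⟨key, fun hp hm => ?_⟩
  have h1 := hp Δvp
  have h2 := hm Δvm
  rw [key]
  linarith
end

section
/- (Semi-discrete entropy inequality for entropy stable fluxes.) Let m ∈ ℕ, Δx > 0, and let η : ℝ^m → ℝ be differentiable. Let u_{i−1}, u_i, u_{i+1} : ℝ → ℝ^m with u_i differentiable, and set v_j(t) = ∇η(u_j(t)) for j ∈ {i−1, i, i+1}. Suppose for every t there are ψ_{i−1}(t), ψ_i(t), ψ_{i+1}(t) ∈ ℝ, entropy conservative fluxes F*₊(t), F*₋(t) ∈ ℝ^m satisfying ⟨v_{i+1}(t) − v_i(t), F*₊(t)⟩ = ψ_{i+1}(t) − ψ_i(t) and ⟨v_i(t) − v_{i−1}(t), F*₋(t)⟩ = ψ_i(t) − ψ_{i−1}(t), and symmetric positive semidefinite matrices D₊(t), D₋(t). Define F̂₊ = F*₊ − ½ D₊ (v_{i+1} − v_i), F̂₋ = F*₋ − ½ D₋ (v_i − v_{i−1}), q̂₊ = q*₊ − ½ ⟨(v_i + v_{i+1})/2, D₊ (v_{i+1} − v_i)⟩, q̂₋ = q*₋ − ½ ⟨(v_{i−1} + v_i)/2,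 D₋ (v_i − v_{i−1})⟩, where q*_± are the numerical entropy fluxes of F*_±. If u_i solves the semi-discrete scheme u_i′(t) = −(F̂₊(t) − F̂₋(t))/Δx, then for every t, d/dt [η(u_i(t))] + (q̂₊(t) − q̂₋(t))/Δx ≤ 0. -/
/-- Semi-discrete entropy inequality for entropy stable fluxes:
if `u_i` solves `u_i' = -(F̂₊ - F̂₋)/Δx` with `F̂_± = F*_± - ½ D_± Δv_±`, `D_±`
symmetric positive semidefinite and `F*_±` entropy conservative, then
`d/dt η(u_i) + (q̂₊ - q̂₋)/Δx ≤ 0`.  Here `v = ∇η` componentwise. -/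
theorem semidiscrete_entropy_inequality (m : ℕ) (Δx : ℝ) (hΔx : 0 < Δx)
    (η : (Fin m → ℝ) → ℝ) (hη : Differentiable ℝ η)
    (um ui up : ℝ → (Fin m → ℝ)) (hui : Differentiable ℝ ui)
    (v : (Fin m → ℝ) → (Fin m → ℝ))
    (hv : ∀ x l, v x l = fderiv ℝ η x (Pi.single l 1))
    (ψm ψi ψp : ℝ → ℝ) (Fsp Fsm : ℝ → (Fin m → ℝ))
    (hFp : ∀ t, ∑ l, (v (up t) l - v (ui t) l) * Fsp t l = ψp t - ψi t)
    (hFm : ∀ t, ∑ l, (v (ui t) l - v (um t) l) * Fsm t l = ψi t - ψm t)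
    (Dp Dm : ℝ → Matrix (Fin m) (Fin m) ℝ)
    (hDpsymm : ∀ t, (Dp t).IsSymm) (hDmsymm : ∀ t, (Dm t).IsSymm)
    (hDppsd : ∀ t (x : Fin m → ℝ), 0 ≤ ∑ l, x l * (Dp t).mulVec x l)
    (hDmpsd : ∀ t (x : Fin m → ℝ), 0 ≤ ∑ l, x l * (Dm t).mulVec x l)
    (qsp qsm : ℝ → ℝ)
    (hqsp : ∀ t, qsp t = (∑ l, ((v (ui t) l + v (up t) l) / 2) * Fsp t l) - (ψi t + ψp t) / 2)
    (hqsm : ∀ t, qsm t = (∑ l, ((v (um t) l + v (ui t) l) / 2) * Fsm t l) - (ψm t + ψi t) / 2)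
    (Fhp Fhm : ℝ → (Fin m → ℝ))
    (hFhp : ∀ t, Fhp t = Fsp t - (1/2 : ℝ) • (Dp t).mulVec (v (up t) - v (ui t)))
    (hFhm : ∀ t, Fhm t = Fsm t - (1/2 : ℝ) • (Dm t).mulVec (v (ui t) - v (um t)))
    (qhp qhm : ℝ → ℝ)
    (hqhp : ∀ t, qhp t = qsp t -
      (1/2) * ∑ l, ((v (ui t) l + v (up t) l) / 2) * (Dp t).mulVec (v (up t) - v (ui t)) l)
    (hqhm : ∀ t, qhm t = qsm t -
      (1/2) * ∑ l, ((v (um t) l + v (ui t) l) / 2) * (Dm t).mulVec (v (ui t) - v (um t)) l)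
    (hscheme : ∀ t, deriv ui t = -(Δx)⁻¹ • (Fhp t - Fhm t)) :
    ∀ t, deriv (fun s => η (ui s)) t + (qhp t - qhm t) / Δx ≤ 0 := by
  intro t
  have e1 : ∀ a b F : Fin m → ℝ, ∑ l, ((a l + b l) / 2) * F l
      = (∑ l, a l * F l + ∑ l, b l * F l) / 2 := by
    intro a b F
    rw [← Finset.sum_add_distrib, Finset.sum_div]
    exact Finset.sum_congr rfl fun l _ => by ring
  have e2 : ∀ a b F : Fin m → ℝ, ∑ l, (a l - b l) * F l
      = ∑ l, a l * F l - ∑ l, b l * F l := by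
    intro a b F
    rw [← Finset.sum_sub_distrib]
    exact Finset.sum_congr rfl fun l _ => by ring
  have hlin : ∀ w : Fin m → ℝ, fderiv ℝ η (ui t) w = ∑ l, v (ui t) l * w l := by
    intro w
    conv_lhs => rw [pi_eq_sum_univ' w]
    rw [map_sum]
    refine Finset.sum_congr rfl fun l _ => ?_
    rw [map_smul, hv, smul_eq_mul, mul_comm]
  have hd : deriv (fun s => η (ui s)) t = fderiv ℝ η (ui t) (deriv ui t) :=
    ((hη (ui t)).hasFDerivAt.comp_hasDerivAt t (hui t).hasDerivAt).deriv
  have hs : ∑ l, v (ui t) l * (Fhp t - Fhm t) l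
      = (∑ l, v (ui t) l * Fsp t l
          - 1/2 * ∑ l, v (ui t) l * (Dp t).mulVec (v (up t) - v (ui t)) l)
        - (∑ l, v (ui t) l * Fsm t l
          - 1/2 * ∑ l, v (ui t) l * (Dm t).mulVec (v (ui t) - v (um t)) l) := by
    rw [hFhp, hFhm, Finset.mul_sum, Finset.mul_sum, ← Finset.sum_sub_distrib,
      ← Finset.sum_sub_distrib, ← Finset.sum_sub_distrib]
    refine Finset.sum_congr rfl fun l _ => ?_
    simp only [Pi.sub_apply, Pi.smul_apply, smul_eq_mul]
    ring
  have h1 := hDppsd t (v (up t) - v (ui t))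
  have h2 := hDmpsd t (v (ui t) - v (um t))
  have h3 := hFp t
  have h4 := hFm t
  simp only [Pi.sub_apply] at h1 h2
  rw [e2] at h1 h2 h3 h4
  have hq : (qhp t - qhm t) - ∑ l, v (ui t) l * (Fhp t - Fhm t) l ≤ 0 := by
    rw [hs, hqhp, hqhm, hqsp, hqsm, e1, e1, e1, e1]
    linarith
  rw [hd, hscheme, map_smul, hlin, smul_eq_mul]
  have : -Δx⁻¹ * ∑ l, v (ui t) l * (Fhp t - Fhm t) l + (qhp t - qhm t) / Δx
      = ((qhp t - qhm t) - ∑ l, v (ui t) l * (Fhp t - Fhm t) l) / Δx := by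
    ring
  rw [this]
  exact div_nonpos_of_nonpos_of_nonneg hq hΔx.le
end

section
/- (Entropy stability of the optimized non-oscillatory diffusion, algebraic form.) Let m ∈ ℕ, v_{i−1}, v_i, v_{i+1} ∈ ℝ^m, ψ_{i−1}, ψ_i, ψ_{i+1} ∈ ℝ, and let F*₊, F*₋ ∈ ℝ^m satisfy ⟨v_{i+1} − v_i, F*₊⟩ = ψ_{i+1} − ψ_i and ⟨v_i − v_{i−1}, F*₋⟩ = ψ_i − ψ_{i−1}, with numerical entropy fluxes q*₊, q*₋. Let F^s₊, F^s₋ ∈ ℝ^m be arbitrary (non-oscillatory) fluxes, set Δv₊ = v_{i+1} − v_i, Δv₋ = v_i − v_{i−1}, and define d₊ = F*₊ − F^s₊ if F*₊ − F^s₊ and Δv₊ satisfy the componentwise sign condition, and d₊ = 0 otherwise; define d₋ analogously with Δv₋. Set F̂₊ = F*₊ − d₊, F̂₋ = F*₋ − d₋, q̂₊ = q*₊ − ⟨(v_i + v_{i+1})/2, d₊⟩, q̂₋ = q*₋ − ⟨(v_{i−1} + v_i)/2, d₋⟩. Then ⟨v_i, F̂₊ − F̂₋⟩ = (q̂₊ −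 q̂₋) + ½ (⟨Δv₊, d₊⟩ + ⟨Δv₋, d₋⟩) and consequently ⟨v_i, F̂₊ − F̂₋⟩ ≥ q̂₊ − q̂₋. -/
theorem sign_sum_nonneg_aux {m : ℕ} (a b : Fin m → ℝ)
    (h : ∀ l, Real.sign (a l) = Real.sign (b l)) : 0 ≤ ∑ l, b l * a l := by
  apply Finset.sum_nonneg
  intro l _
  have hl := h l
  rcases lt_trichotomy (a l) 0 with ha | ha | ha
  · rcases lt_trichotomy (b l) 0 with hb | hb | hb
    · exact (mul_pos_of_neg_of_neg hb ha).le
    · simp [hb]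
    · rw [Real.sign_of_neg ha, Real.sign_of_pos hb] at hl
      norm_num at hl
  · simp [ha]
  · rcases lt_trichotomy (b l) 0 with hb | hb | hb
    · rw [Real.sign_of_pos ha, Real.sign_of_neg hb] at hl
      norm_num at hl
    · simp [hb]
    · exact (mul_pos hb ha).le

/-- Entropy stability of the optimized non-oscillatory diffusion,
algebraic form: with the switched diffusion `d_± = F*_± - F^s_±` when the flux sign
stability condition holds and `d_± = 0` otherwise,
`⟨v_i, F̂₊ - F̂₋⟩ = (q̂₊ - q̂₋) + ½ (⟨Δv₊, d₊⟩ + ⟨Δv₋, d₋⟩) ≥ q̂₊ - q̂₋`. -/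
theorem optimized_diffusion_entropy_stable (m : ℕ)
    (vm vi vp : Fin m → ℝ) (ψm ψi ψp : ℝ) (Fsp Fsm : Fin m → ℝ)
    (hFp : ∑ l, (vp l - vi l) * Fsp l = ψp - ψi)
    (hFm : ∑ l, (vi l - vm l) * Fsm l = ψi - ψm)
    (qsp qsm : ℝ)
    (hqsp : qsp = (∑ l, ((vi l + vp l) / 2) * Fsp l) - (ψi + ψp) / 2)
    (hqsm : qsm = (∑ l, ((vm l + vi l) / 2) * Fsm l) - (ψm + ψi) / 2)
    (FNp FNm : Fin m → ℝ)
    (Δvp Δvm : Fin m → ℝ) (hΔvp : Δvp = vp - vi) (hΔvm : Δvm = vi - vm)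
    (dp dm : Fin m → ℝ)
    (hdp_pos : (∀ l, Real.sign ((Fsp - FNp) l) = Real.sign (Δvp l)) → dp = Fsp - FNp)
    (hdp_zero : ¬ (∀ l, Real.sign ((Fsp - FNp) l) = Real.sign (Δvp l)) → dp = 0)
    (hdm_pos : (∀ l, Real.sign ((Fsm - FNm) l) = Real.sign (Δvm l)) → dm = Fsm - FNm)
    (hdm_zero : ¬ (∀ l, Real.sign ((Fsm - FNm) l) = Real.sign (Δvm l)) → dm = 0)
    (Fhp Fhm : Fin m → ℝ) (hFhp : Fhp = Fsp - dp) (hFhm : Fhm = Fsm - dm)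
    (qhp qhm : ℝ)
    (hqhp : qhp = qsp - ∑ l, ((vi l + vp l) / 2) * dp l)
    (hqhm : qhm = qsm - ∑ l, ((vm l + vi l) / 2) * dm l) :
    (∑ l, vi l * (Fhp l - Fhm l) =
      (qhp - qhm) + (1/2) * ((∑ l, Δvp l * dp l) + ∑ l, Δvm l * dm l)) ∧
    qhp - qhm ≤ ∑ l, vi l * (Fhp l - Fhm l) := by
  have key : ∑ l, vi l * (Fhp l - Fhm l) =
      (qhp - qhm) + (1/2) * ((∑ l, Δvp l * dp l) + ∑ l, Δvm l * dm l) := by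
    have e : ∑ l, vi l * (Fhp l - Fhm l) =
        (∑ l, ((vi l + vp l) / 2) * Fsp l) - (1/2) * (∑ l, (vp l - vi l) * Fsp l)
        - (∑ l, ((vm l + vi l) / 2) * Fsm l) - (1/2) * (∑ l, (vi l - vm l) * Fsm l)
        - (∑ l, ((vi l + vp l) / 2) * dp l) + (∑ l, ((vm l + vi l) / 2) * dm l)
        + (1/2) * (∑ l, Δvp l * dp l) + (1/2) * (∑ l, Δvm l * dm l) := by
      simp only [Finset.mul_sum, ← Finset.sum_sub_distrib, ← Finset.sum_add_distrib]
      refine Finset.sum_congr rfl fun l _ => ?_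
      simp only [hFhp, hFhm, hΔvp, hΔvm, Pi.sub_apply]
      ring
    rw [e, hFp, hFm, hqhp, hqhm, hqsp, hqsm]
    ring
  have hp : 0 ≤ ∑ l, Δvp l * dp l := by
    by_cases h : ∀ l, Real.sign ((Fsp - FNp) l) = Real.sign (Δvp l)
    · rw [hdp_pos h]
      exact sign_sum_nonneg_aux _ _ h
    · simp [hdp_zero h]
  have hm : 0 ≤ ∑ l, Δvm l * dm l := by
    by_cases h : ∀ l, Real.sign ((Fsm - FNm) l) = Real.sign (Δvm l)
    · rw [hdm_pos h]
      exact sign_sum_nonneg_aux _ _ h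
    · simp [hdm_zero h]
  exact ⟨key, by rw [key]; linarith⟩
end

section
/- (Main theorem: semi-discrete entropy inequality for the optimized entropy stable scheme.) Let m ∈ ℕ, Δx > 0, η : ℝ^m → ℝ differentiable, and let u_{i−1}, u_i, u_{i+1} : ℝ → ℝ^m with u_i differentiable; set v_j(t) = ∇η(u_j(t)). Suppose for every t there are ψ_{i−1}(t), ψ_i(t), ψ_{i+1}(t) ∈ ℝ and fluxes F*₊(t), F*₋(t) ∈ ℝ^m satisfying ⟨v_{i+1} − v_i, F*₊⟩ = ψ_{i+1} − ψ_i and ⟨v_i − v_{i−1}, F*₋⟩ = ψ_i − ψ_{i−1}, and arbitrary fluxes F^s₊(t), F^s₋(t) ∈ ℝ^m. Define d₊ = F*₊ − F^s₊ if F*₊ − F^s₊ and v_{i+1} − v_i satisfy the componentwise sign condition and d₊ = 0 otherwise (d₋ analogously), F̂₊ = F*₊ − d₊, F̂₋ = F*₋ − d₋, q̂₊ = q*₊ − ⟨(v_i + v_{i+1})/2, d₊⟩, q̂₋ = q*₋ − ⟨(v_{i−1} + v_i)/2, d₋⟩, with q*_± the numerical entropy fluxes of F*_±. If u_i′(t)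 = −(F̂₊(t) − F̂₋(t))/Δx for all t, then d/dt [η(u_i(t))] + (q̂₊(t) − q̂₋(t))/Δx ≤ 0 for all t. -/
lemma sign_mul_nonneg_aux {a b : ℝ} (h : Real.sign a = Real.sign b) : 0 ≤ b * a := by
  rcases lt_trichotomy a 0 with ha | ha | ha <;> rcases lt_trichotomy b 0 with hb | hb | hb
  all_goals first
    | nlinarith
    | (exfalso; simp [Real.sign_of_neg, Real.sign_of_pos, *] at h; norm_num at h)

lemma switch_nonneg_aux {m : ℕ} (F w d : Fin m → ℝ)
    (h1 : (∀ l, Real.sign (F l) = Real.sign (w l)) → d = F)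
    (h2 : ¬ (∀ l, Real.sign (F l) = Real.sign (w l)) → d = 0) :
    0 ≤ ∑ l, w l * d l := by
  by_cases h : ∀ l, Real.sign (F l) = Real.sign (w l)
  · rw [h1 h]
    exact Finset.sum_nonneg fun l _ => sign_mul_nonneg_aux (h l)
  · rw [h2 h]; simp

/-- Main theorem: semi-discrete entropy inequality for the optimized
entropy stable scheme: with the switched diffusion `d_±` and `F̂_± = F*_± - d_±`,
if `u_i' = -(F̂₊ - F̂₋)/Δx` then `d/dt η(u_i) + (q̂₊ - q̂₋)/Δx ≤ 0`.
Here `v = ∇η` componentwise. -/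
theorem optimized_scheme_entropy_inequality (m : ℕ) (Δx : ℝ) (hΔx : 0 < Δx)
    (η : (Fin m → ℝ) → ℝ) (hη : Differentiable ℝ η)
    (um ui up : ℝ → (Fin m → ℝ)) (hui : Differentiable ℝ ui)
    (v : (Fin m → ℝ) → (Fin m → ℝ))
    (hv : ∀ x l, v x l = fderiv ℝ η x (Pi.single l 1))
    (ψm ψi ψp : ℝ → ℝ) (Fsp Fsm : ℝ → (Fin m → ℝ))
    (hFp : ∀ t, ∑ l, (v (up t) l - v (ui t) l) * Fsp t l = ψp t - ψi t)
    (hFm : ∀ t, ∑ l, (v (ui t) l - v (um t) l) * Fsm t l = ψi t - ψm t)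
    (FNp FNm : ℝ → (Fin m → ℝ))
    (dp dm : ℝ → (Fin m → ℝ))
    (hdp_pos : ∀ t, (∀ l, Real.sign ((Fsp t - FNp t) l) = Real.sign ((v (up t) - v (ui t)) l)) →
      dp t = Fsp t - FNp t)
    (hdp_zero : ∀ t, ¬ (∀ l, Real.sign ((Fsp t - FNp t) l) = Real.sign ((v (up t) - v (ui t)) l)) →
      dp t = 0)
    (hdm_pos : ∀ t, (∀ l, Real.sign ((Fsm t - FNm t) l) = Real.sign ((v (ui t) - v (um t)) l)) →
      dm t = Fsm t - FNm t)
    (hdm_zero : ∀ t, ¬ (∀ l, Real.sign ((Fsm t - FNm t) l) = Real.sign ((v (ui t) - v (um t)) l)) →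
      dm t = 0)
    (qsp qsm : ℝ → ℝ)
    (hqsp : ∀ t, qsp t = (∑ l, ((v (ui t) l + v (up t) l) / 2) * Fsp t l) - (ψi t + ψp t) / 2)
    (hqsm : ∀ t, qsm t = (∑ l, ((v (um t) l + v (ui t) l) / 2) * Fsm t l) - (ψm t + ψi t) / 2)
    (Fhp Fhm : ℝ → (Fin m → ℝ))
    (hFhp : ∀ t, Fhp t = Fsp t - dp t) (hFhm : ∀ t, Fhm t = Fsm t - dm t)
    (qhp qhm : ℝ → ℝ)
    (hqhp : ∀ t, qhp t = qsp t - ∑ l, ((v (ui t) l + v (up t) l) / 2) * dp t l)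
    (hqhm : ∀ t, qhm t = qsm t - ∑ l, ((v (um t) l + v (ui t) l) / 2) * dm t l)
    (hscheme : ∀ t, deriv ui t = -(Δx)⁻¹ • (Fhp t - Fhm t)) :
    ∀ t, deriv (fun s => η (ui s)) t + (qhp t - qhm t) / Δx ≤ 0 := by
  intro t
  have hp := switch_nonneg_aux _ _ _ (hdp_pos t) (hdp_zero t)
  have hm := switch_nonneg_aux _ _ _ (hdm_pos t) (hdm_zero t)
  have hlin : ∀ x w, fderiv ℝ η x w = ∑ l, v x l * w l := by
    intro x w
    conv_lhs => rw [pi_eq_sum_univ' w]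
    rw [map_sum]
    refine Finset.sum_congr rfl fun l _ => ?_
    rw [map_smul, hv, smul_eq_mul, mul_comm]
  have hd : deriv (fun s => η (ui s)) t = ∑ l, v (ui t) l * deriv ui t l := by
    rw [← hlin]
    exact ((hη (ui t)).hasFDerivAt.comp_hasDerivAt t (hui t).hasDerivAt).deriv
  have hd2 : deriv (fun s => η (ui s)) t
      = -(∑ l, v (ui t) l * (Fsp t l - dp t l - (Fsm t l - dm t l))) / Δx := by
    rw [hd, hscheme t, hFhp, hFhm, ← Finset.sum_neg_distrib, Finset.sum_div]
    refine Finset.sum_congr rfl fun l _ => ?_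
    simp only [Pi.smul_apply, Pi.sub_apply, smul_eq_mul]
    field_simp
  rw [hd2, ← add_div]
  refine div_nonpos_of_nonpos_of_nonneg ?_ hΔx.le
  have e1 := hFp t
  have e2 := hFm t
  rw [hqhp, hqhm, hqsp, hqsm]
  simp only [Pi.sub_apply, add_div, add_mul, mul_sub, sub_mul, div_mul_eq_mul_div,
    Finset.sum_add_distrib, Finset.sum_sub_distrib, ← Finset.sum_div] at hp hm e1 e2 ⊢
  linarith
end

section
/- (Semi-discrete entropy equality for entropy conservative schemes, Tadmor's theorem.) Let m ∈ ℕ, Δx > 0, η : ℝ^m → ℝ differentiable, and let u_{i−1}, u_i, u_{i+1} : ℝ → ℝ^m with u_i differentiable; set v_j(t) = ∇η(u_j(t)) for j ∈ {i−1, i, i+1}. Suppose for every t there are ψ_{i−1}(t), ψ_i(t), ψ_{i+1}(t) ∈ ℝ and fluxes F*₊(t), F*₋(t) ∈ ℝ^m satisfying ⟨v_{i+1}(t) − v_i(t), F*₊(t)⟩ = ψ_{i+1}(t) − ψ_i(t) and ⟨v_i(t) − v_{i−1}(t), F*₋(t)⟩ = ψ_i(t) − ψ_{i−1}(t), and define q*₊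 = ⟨(v_i + v_{i+1})/2, F*₊⟩ − (ψ_i + ψ_{i+1})/2, q*₋ = ⟨(v_{i−1} + v_i)/2, F*₋⟩ − (ψ_{i−1} + ψ_i)/2. If u_i′(t) = −(F*₊(t) − F*₋(t))/Δx for all t, then d/dt [η(u_i(t))] + (q*₊(t) − q*₋(t))/Δx = 0 for all t. -/
/-- Semi-discrete entropy equality for entropy conservative schemes,
Tadmor's theorem: if `u_i' = -(F*₊ - F*₋)/Δx` with entropy conservative fluxes
`F*_±`, then `d/dt η(u_i) + (q*₊ - q*₋)/Δx = 0`.  Here `v = ∇η` componentwise. -/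
theorem semidiscrete_entropy_equality (m : ℕ) (Δx : ℝ) (hΔx : 0 < Δx)
    (η : (Fin m → ℝ) → ℝ) (hη : Differentiable ℝ η)
    (um ui up : ℝ → (Fin m → ℝ)) (hui : Differentiable ℝ ui)
    (v : (Fin m → ℝ) → (Fin m → ℝ))
    (hv : ∀ x l, v x l = fderiv ℝ η x (Pi.single l 1))
    (ψm ψi ψp : ℝ → ℝ) (Fsp Fsm : ℝ → (Fin m → ℝ))
    (hFp : ∀ t, ∑ l, (v (up t) l - v (ui t) l) * Fsp t l = ψp t - ψi t)
    (hFm : ∀ t, ∑ l, (v (ui t) l - v (um t) l) * Fsm t l = ψi t - ψm t)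
    (qsp qsm : ℝ → ℝ)
    (hqsp : ∀ t, qsp t = (∑ l, ((v (ui t) l + v (up t) l) / 2) * Fsp t l) - (ψi t + ψp t) / 2)
    (hqsm : ∀ t, qsm t = (∑ l, ((v (um t) l + v (ui t) l) / 2) * Fsm t l) - (ψm t + ψi t) / 2)
    (hscheme : ∀ t, deriv ui t = -(Δx)⁻¹ • (Fsp t - Fsm t)) :
    ∀ t, deriv (fun s => η (ui s)) t + (qsp t - qsm t) / Δx = 0 := by
  intro t
  have hlin : ∀ w : Fin m → ℝ, fderiv ℝ η (ui t) w = ∑ l, v (ui t) l * w l := by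
    intro w
    conv_lhs => rw [pi_eq_sum_univ' w]
    rw [map_sum]
    refine Finset.sum_congr rfl fun l _ => ?_
    rw [hv, map_smul, smul_eq_mul, mul_comm]
  have hd : deriv (fun s => η (ui s)) t = fderiv ℝ η (ui t) (deriv ui t) :=
    ((hη (ui t)).hasFDerivAt.comp_hasDerivAt t (hui t).hasDerivAt).deriv
  have h1 : qsp t = (∑ l, v (ui t) l * Fsp t l) - ψi t := by
    have e : (∑ l, ((v (ui t) l + v (up t) l) / 2) * Fsp t l)
        = (∑ l, v (ui t) l * Fsp t l)
          + (1 / 2) * ∑ l, (v (up t) l - v (ui t) l) * Fsp t l := by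
      rw [Finset.mul_sum, ← Finset.sum_add_distrib]
      exact Finset.sum_congr rfl fun l _ => by ring
    rw [hqsp, e, hFp]; ring
  have h2 : qsm t = (∑ l, v (ui t) l * Fsm t l) - ψi t := by
    have e : (∑ l, ((v (um t) l + v (ui t) l) / 2) * Fsm t l)
        = (∑ l, v (ui t) l * Fsm t l)
          - (1 / 2) * ∑ l, (v (ui t) l - v (um t) l) * Fsm t l := by
      rw [Finset.mul_sum, ← Finset.sum_sub_distrib]
      exact Finset.sum_congr rfl fun l _ => by ring
    rw [hqsm, e, hFm]; ring
  rw [hd, hscheme, map_smul, map_sub, hlin, hlin, h1, h2, smul_eq_mul]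
  ring
end
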